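/- Additivity of unique information: if the combined system consists of two independent systems, i.e., the joint distribution of ((X,X'),(Y,Y'),(Z,Z')) is the product P((x,x'),(y,y'),(z,z')) = p(x,y,z)·p'(x',y',z'), then Un((X,X')→(Z,Z') | (Y,Y')) = Un(X→Z|Y) + Un(X'→Z'|Y'), where the left-hand side is the unique information of the combined system on (𝒳×𝒳')×(𝒴×𝒴')×(𝒵×𝒵') and the right-hand sides are those of p and p'. -/

import Mathlib

open Finset

/-- Shannon entropy of a distribution on a finite type (natural-log base). -/
noncomputable def ent {α : Type*} [Fintype α] (p : α → ℝ) : ℝ :=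
  ∑ a, Real.negMulLog (p a)

/-- Mutual information between the two coordinates of a joint distribution. -/
noncomputable def mutInfo {α β : Type*} [Fintype α] [Fintype β] (q : α × β → ℝ) : ℝ :=
  ent (fun a => ∑ b, q (a, b)) + ent (fun b => ∑ a, q (a, b)) - ent q

/-- Conditional entropy of the first coordinate given the second: H(A|B) = H(A,B) - H(B). -/
noncomputable def condEntFst {α β : Type*} [Fintype α] [Fintype β] (q : α × β → ℝ) : ℝ :=
  ent q - ent (fun b => ∑ a, q (a, b))

/-- Conditional entropy of the second coordinate given the first: H(B|A) = H(A,B) - H(A). -/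
noncomputable def condEntSnd {α β : Type*} [Fintype α] [Fintype β] (q : α × β → ℝ) : ℝ :=
  ent q - ent (fun a => ∑ b, q (a, b))

section PID

variable {X Y Z : Type*} [Fintype X] [Fintype Y] [Fintype Z]

/-- 𝒳-marginal of a joint distribution on 𝒳×𝒴×𝒵. -/
noncomputable def pX (p : X × Y × Z → ℝ) (x : X) : ℝ := ∑ y, ∑ z, p (x, y, z)

/-- 𝒴-marginal. -/
noncomputable def pY (p : X × Y × Z → ℝ) (y : Y) : ℝ := ∑ x, ∑ z, p (x, y, z)

/-- 𝒵-marginal. -/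
noncomputable def pZ (p : X × Y × Z → ℝ) (z : Z) : ℝ := ∑ x, ∑ y, p (x, y, z)

/-- The do-operation: q(x,y,z) = p(x,y,z)·c(z)/p_Z(z) if p_Z(z) > 0, else 0. -/
noncomputable def doOp (p : X × Y × Z → ℝ) (c : Z → ℝ) : X × Y × Z → ℝ :=
  fun t => if 0 < pZ p t.2.2 then p t * c t.2.2 / pZ p t.2.2 else 0

/-- (𝒳,𝒵)-marginal. -/
noncomputable def margXZ (p : X × Y × Z → ℝ) : X × Z → ℝ := fun t => ∑ y, p (t.1, y, t.2)

/-- (𝒴,𝒵)-marginal. -/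
noncomputable def margYZ (p : X × Y × Z → ℝ) : Y × Z → ℝ := fun t => ∑ x, p (x, t.1, t.2)

/-- (𝒳,𝒴)-marginal. -/
noncomputable def margXY (p : X × Y × Z → ℝ) : X × Y → ℝ := fun t => ∑ z, p (t.1, t.2, z)

/-- c_y(z) = Pr(Z = z | Y = y). -/
noncomputable def cy (p : X × Y × Z → ℝ) (y : Y) : Z → ℝ :=
  fun z => (∑ x, p (x, y, z)) / pY p y

/-- The distribution of (A_y, B_y, C_y) = do(p | c_y). -/
noncomputable def doy (p : X × Y × Z → ℝ) (y : Y) : X × Y × Z → ℝ := doOp p (cy p y)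

/-- c^x(z) = Pr(Z = z | X = x). -/
noncomputable def cx (p : X × Y × Z → ℝ) (x : X) : Z → ℝ :=
  fun z => (∑ y, p (x, y, z)) / pX p x

/-- The distribution of (A^x, B^x, C^x) = do(p | c^x). -/
noncomputable def dox (p : X × Y × Z → ℝ) (x : X) : X × Y × Z → ℝ := doOp p (cx p x)

/-- Unique information Un(X→Z|Y) = Σ_{y : p_Y(y)>0} p_Y(y)·I(A_y;C_y). -/
noncomputable def Un (p : X × Y × Z → ℝ) : ℝ :=
  ∑ y ∈ Finset.univ.filter (fun y => 0 < pY p y), pY p y * mutInfo (margXZ (doy p y))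

/-- Unique information Un(Y→Z|X) = Σ_{x : p_X(x)>0} p_X(x)·I(B^x;C^x). -/
noncomputable def UnYX (p : X × Y × Z → ℝ) : ℝ :=
  ∑ x ∈ Finset.univ.filter (fun x => 0 < pX p x), pX p x * mutInfo (margYZ (dox p x))

/-- Redundant information Red(X,Y→Z) = I(X;Z) − Un(X→Z|Y). -/
noncomputable def Red (p : X × Y × Z → ℝ) : ℝ := mutInfo (margXZ p) - Un p

/-- Conditional mutual information I(X;Z|Y) = H(X,Y) + H(Y,Z) − H(Y) − H(X,Y,Z). -/
noncomputable def condMI (p : X × Y × Z → ℝ) : ℝ :=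
  ent (margXY p) + ent (margYZ p) - ent (pY p) - ent p

/-- Synergistic information Syn(X,Y→Z) = I(X;Z|Y) − Un(X→Z|Y). -/
noncomputable def Syn (p : X × Y × Z → ℝ) : ℝ := condMI p - Un p

end PID

/-!
Marginals, the conditional laws `c_y` and the do-operation all commute with products of independent
systems, so the pair `(A, C)` belonging to `(y, y')` in the product system is an independent product
of the pairs belonging to `y` and to `y'`. Because `negMulLog (a * b) = b * negMulLog a +
a * negMulLog b`, entropy and mutual information obey a Leibniz rule on such products,
`I(f ⊗ g) = |g| I(f) + |f| I(g)` with `|·|` the total mass. The pairs at hand have mass one wherever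
`p_Y(y) p'_Y(y')` is positive, and averaging with these weights separates into the two unique
informations.
-/

section Products

variable {α β γ δ : Type*}

/-- The product of two joint distributions, regrouped as a joint distribution of the two first
coordinates and the two second coordinates, as `mutInfo` expects. -/
def pairProd (f : α × β → ℝ) (g : γ × δ → ℝ) : (α × γ) × (β × δ) → ℝ :=
  fun s => f (s.1.1, s.2.1) * g (s.1.2, s.2.2)

/-- The joint distribution of two independent systems, regrouped as a single system on the
product alphabets whose unique information is to be computed. -/
def tripleProd {X Y Z X' Y' Z' : Type*} (p : X × Y × Z → ℝ) (p' : X' × Y' × Z' → ℝ) :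
    (X × X') × (Y × Y') × (Z × Z') → ℝ :=
  fun s => p (s.1.1, s.2.1.1, s.2.2.1) * p' (s.1.2, s.2.1.2, s.2.2.2)

theorem tripleProd_nonneg {X Y Z X' Y' Z' : Type*} {p : X × Y × Z → ℝ} {p' : X' × Y' × Z' → ℝ}
    (hp : ∀ t, 0 ≤ p t) (hp' : ∀ t, 0 ≤ p' t) (t : (X × X') × (Y × Y') × (Z × Z')) :
    0 ≤ tripleProd p p' t :=
  mul_nonneg (hp _) (hp' _)

theorem sum_prod_mul {R : Type*} [NonUnitalNonAssocSemiring R] [Fintype α] [Fintype β]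
    (f : α → R) (g : β → R) :
    ∑ s : α × β, f s.1 * g s.2 = (∑ a, f a) * ∑ b, g b := by
  rw [Fintype.sum_mul_sum, Fintype.sum_prod_type]

end Products

section Entropy

variable {α β γ δ : Type*} [Fintype α] [Fintype β] [Fintype γ] [Fintype δ]

theorem ent_comp_equiv (e : α ≃ β) (f : β → ℝ) : ent (fun a => f (e a)) = ent f :=
  e.sum_comp fun b => Real.negMulLog (f b)

theorem ent_prod (f : α → ℝ) (g : β → ℝ) :
    ent (fun s : α × β => f s.1 * g s.2) = (∑ b, g b) * ent f + (∑ a, f a) * ent g := by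
  simp only [ent, Real.negMulLog_mul, sum_add_distrib]
  rw [sum_prod_mul f fun b => Real.negMulLog (g b), ← sum_prod_mul g, add_left_inj]
  exact (Equiv.prodComm α β).sum_comp fun s : β × α => g s.1 * Real.negMulLog (f s.2)

theorem ent_pairProd (f : α × β → ℝ) (g : γ × δ → ℝ) :
    ent (pairProd f g) = (∑ t, g t) * ent f + (∑ t, f t) * ent g := by
  rw [← ent_prod]
  exact ent_comp_equiv (Equiv.prodProdProdComm α γ β δ) fun s => f s.1 * g s.2

theorem mutInfo_pairProd (f : α × β → ℝ) (g : γ × δ → ℝ) :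
    mutInfo (pairProd f g) = (∑ t, g t) * mutInfo f + (∑ t, f t) * mutInfo g := by
  have fst_marginal : ent (fun s => ∑ t, pairProd f g (s, t)) =
      (∑ t, g t) * ent (fun a => ∑ b, f (a, b)) + (∑ t, f t) * ent (fun c => ∑ d, g (c, d)) := by
    rw [Fintype.sum_prod_type f, Fintype.sum_prod_type g, ← ent_prod]
    exact congrArg ent <| funext fun s =>
      sum_prod_mul (fun b => f (s.1, b)) fun d => g (s.2, d)
  have snd_marginal : ent (fun t => ∑ s, pairProd f g (s, t)) =
      (∑ t, g t) * ent (fun b => ∑ a, f (a, b)) + (∑ t, f t) * ent (fun d => ∑ c, g (c, d)) := by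
    rw [Fintype.sum_prod_type_right f, Fintype.sum_prod_type_right g, ← ent_prod]
    exact congrArg ent <| funext fun t =>
      sum_prod_mul (fun a => f (a, t.1)) fun c => g (c, t.2)
  rw [mutInfo, fst_marginal, snd_marginal, ent_pairProd, mutInfo, mutInfo]
  ring

end Entropy

section System

variable {X Y Z : Type*}

theorem pY_nonneg [Fintype X] [Fintype Z] {p : X × Y × Z → ℝ} (hp : ∀ t, 0 ≤ p t) (y : Y) :
    0 ≤ pY p y :=
  sum_nonneg fun _ _ => sum_nonneg fun _ _ => hp _

-- `cy p y` has total mass one unless `pY p y = 0`, when it vanishes because `x / 0 = 0`; the factor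
-- `pY p y` covers both cases.
theorem pY_mul_sum_cy [Fintype X] [Fintype Z] (p : X × Y × Z → ℝ) (y : Y) :
    pY p y * ∑ z, cy p y z = pY p y := by
  have sum_cy : ∑ z, cy p y z = pY p y / pY p y := by
    simp only [cy, ← sum_div]
    rw [sum_comm, pY]
  rw [sum_cy, ← mul_div_assoc, mul_self_div_self]

variable [Fintype X] [Fintype Y]

theorem pZ_nonneg {p : X × Y × Z → ℝ} (hp : ∀ t, 0 ≤ p t) (z : Z) : 0 ≤ pZ p z :=
  sum_nonneg fun _ _ => sum_nonneg fun _ _ => hp _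

theorem eq_zero_of_pZ_eq_zero {p : X × Y × Z → ℝ} (hp : ∀ t, 0 ≤ p t) {z : Z}
    (hz : pZ p z = 0) (x : X) (y : Y) : p (x, y, z) = 0 := by
  have sum_eq_zero : ∑ y, p (x, y, z) = 0 :=
    (sum_eq_zero_iff_of_nonneg fun _ _ => sum_nonneg fun _ _ => hp _).1 hz x (mem_univ x)
  exact (sum_eq_zero_iff_of_nonneg fun _ _ => hp _).1 sum_eq_zero y (mem_univ y)

-- No case split on `pZ p z` remains, since `x / 0 = 0`.
theorem doOp_apply {p : X × Y × Z → ℝ} (hp : ∀ t, 0 ≤ p t) (c : Z → ℝ) (t : X × Y × Z) :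
    doOp p c t = p t * c t.2.2 / pZ p t.2.2 := by
  rw [doOp, ite_eq_left_iff, (pZ_nonneg hp _).not_lt_iff_eq]
  intro hz
  rw [← hz, div_zero]

theorem pZ_doOp {p : X × Y × Z → ℝ} (hp : ∀ t, 0 ≤ p t) {c : Z → ℝ} {z : Z}
    (hc : pZ p z = 0 → c z = 0) : pZ (doOp p c) z = c z :=
  calc pZ (doOp p c) z = pZ p z * c z / pZ p z := by
        simp only [pZ, doOp_apply hp, sum_mul, sum_div]
    _ = c z := mul_div_cancel_left_of_imp hc

variable [Fintype Z]

theorem sum_pY (p : X × Y × Z → ℝ) : ∑ y, pY p y = ∑ t, p t := by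
  simp only [pY, Fintype.sum_prod_type]
  exact sum_comm

theorem sum_margXZ (p : X × Y × Z → ℝ) : ∑ t, margXZ p t = ∑ t, p t := by
  simp only [margXZ, Fintype.sum_prod_type]
  exact sum_congr rfl fun _ _ => sum_comm

theorem sum_pZ (p : X × Y × Z → ℝ) : ∑ z, pZ p z = ∑ t, p t := by
  rw [← sum_margXZ, Fintype.sum_prod_type_right]
  rfl

theorem cy_eq_zero {p : X × Y × Z → ℝ} (hp : ∀ t, 0 ≤ p t) (y : Y) {z : Z}
    (hz : pZ p z = 0) : cy p y z = 0 := by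
  simp only [cy, eq_zero_of_pZ_eq_zero hp hz, sum_const_zero, zero_div]

theorem pY_mul_sum_doy {p : X × Y × Z → ℝ} (hp : ∀ t, 0 ≤ p t) (y : Y) :
    pY p y * ∑ t, doy p y t = pY p y := by
  rw [← sum_pZ]
  simp only [doy, pZ_doOp hp (cy_eq_zero hp y), pY_mul_sum_cy]

theorem un_eq_sum {p : X × Y × Z → ℝ} (hp : ∀ t, 0 ≤ p t) :
    Un p = ∑ y, pY p y * mutInfo (margXZ (doy p y)) :=
  sum_filter_of_ne fun y _ hy => (pY_nonneg hp y).lt_of_ne' (left_ne_zero_of_mul hy)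

end System

section IndependentSystems

variable {X Y Z X' Y' Z' : Type*}

theorem margXZ_tripleProd [Fintype Y] [Fintype Y'] (p : X × Y × Z → ℝ) (p' : X' × Y' × Z' → ℝ) :
    margXZ (tripleProd p p') = pairProd (margXZ p) (margXZ p') :=
  funext fun t => sum_prod_mul (fun y => p (t.1.1, y, t.2.1)) fun y' => p' (t.1.2, y', t.2.2)

theorem pZ_tripleProd [Fintype X] [Fintype Y] [Fintype X'] [Fintype Y']
    (p : X × Y × Z → ℝ) (p' : X' × Y' × Z' → ℝ) (z : Z × Z') :
    pZ (tripleProd p p') z = pZ p z.1 * pZ p' z.2 := by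
  simp only [pZ, tripleProd, Fintype.sum_prod_type, Fintype.sum_mul_sum]

theorem doOp_tripleProd [Fintype X] [Fintype Y] [Fintype X'] [Fintype Y']
    {p : X × Y × Z → ℝ} {p' : X' × Y' × Z' → ℝ} (hp : ∀ t, 0 ≤ p t) (hp' : ∀ t, 0 ≤ p' t)
    (c : Z → ℝ) (c' : Z' → ℝ) :
    doOp (tripleProd p p') (fun z => c z.1 * c' z.2) = tripleProd (doOp p c) (doOp p' c') := by
  funext t
  simp only [doOp_apply (tripleProd_nonneg hp hp'), tripleProd, doOp_apply hp, doOp_apply hp',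
    pZ_tripleProd, div_mul_div_comm, mul_mul_mul_comm]

variable [Fintype X] [Fintype Z] [Fintype X'] [Fintype Z']

theorem pY_tripleProd (p : X × Y × Z → ℝ) (p' : X' × Y' × Z' → ℝ) (y : Y × Y') :
    pY (tripleProd p p') y = pY p y.1 * pY p' y.2 := by
  simp only [pY, tripleProd, Fintype.sum_prod_type, Fintype.sum_mul_sum]

theorem cy_tripleProd (p : X × Y × Z → ℝ) (p' : X' × Y' × Z' → ℝ) (y : Y × Y') (z : Z × Z') :
    cy (tripleProd p p') y z = cy p y.1 z.1 * cy p' y.2 z.2 := by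
  simp only [cy, pY_tripleProd, tripleProd, Fintype.sum_prod_type, div_mul_div_comm,
    Fintype.sum_mul_sum]

variable [Fintype Y] [Fintype Y'] {p : X × Y × Z → ℝ} {p' : X' × Y' × Z' → ℝ}

theorem doy_tripleProd (hp : ∀ t, 0 ≤ p t) (hp' : ∀ t, 0 ≤ p' t) (y : Y × Y') :
    doy (tripleProd p p') y = tripleProd (doy p y.1) (doy p' y.2) := by
  rw [doy, funext (cy_tripleProd p p' y), doOp_tripleProd hp hp', doy, doy]

theorem pY_mul_mutInfo_tripleProd (hp : ∀ t, 0 ≤ p t) (hp' : ∀ t, 0 ≤ p' t) (y : Y × Y') :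
    pY (tripleProd p p') y * mutInfo (margXZ (doy (tripleProd p p') y)) =
      pY p y.1 * mutInfo (margXZ (doy p y.1)) * pY p' y.2 +
        pY p y.1 * (pY p' y.2 * mutInfo (margXZ (doy p' y.2))) := by
  rw [pY_tripleProd, doy_tripleProd hp hp', margXZ_tripleProd, mutInfo_pairProd, sum_margXZ,
    sum_margXZ]
  linear_combination
    pY p y.1 * mutInfo (margXZ (doy p y.1)) * pY_mul_sum_doy hp' y.2 +
      pY p' y.2 * mutInfo (margXZ (doy p' y.2)) * pY_mul_sum_doy hp y.1

end IndependentSystems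

theorem stmt16_general {X Y Z X' Y' Z' : Type*}
    [Fintype X] [Fintype Y] [Fintype Z] [Fintype X'] [Fintype Y'] [Fintype Z']
    (p : X × Y × Z → ℝ) (hp0 : ∀ t, 0 ≤ p t)
    (p' : X' × Y' × Z' → ℝ) (hp'0 : ∀ t, 0 ≤ p' t) :
    Un (fun s : (X × X') × (Y × Y') × (Z × Z') =>
      p (s.1.1, s.2.1.1, s.2.2.1) * p' (s.1.2, s.2.1.2, s.2.2.2)) =
        (∑ t, p' t) * Un p + (∑ t, p t) * Un p' := by
  let I (y : Y) := mutInfo (margXZ (doy p y))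
  let I' (y' : Y') := mutInfo (margXZ (doy p' y'))
  calc Un (tripleProd p p')
      = ∑ y : Y × Y', (pY p y.1 * I y.1 * pY p' y.2 + pY p y.1 * (pY p' y.2 * I' y.2)) := by
        rw [un_eq_sum (tripleProd_nonneg hp0 hp'0)]
        exact sum_congr rfl fun y _ => pY_mul_mutInfo_tripleProd hp0 hp'0 y
    _ = Un p * ∑ y', pY p' y' + (∑ y, pY p y) * Un p' := by
        rw [sum_add_distrib, sum_prod_mul (fun y => pY p y * I y),
          sum_prod_mul (pY p) fun y' => pY p' y' * I' y', un_eq_sum hp0, un_eq_sum hp'0]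
    _ = (∑ t, p' t) * Un p + (∑ t, p t) * Un p' := by
        rw [sum_pY, sum_pY, mul_comm (Un p)]

theorem stmt16 {X Y Z X' Y' Z' : Type*}
    [Fintype X] [Fintype Y] [Fintype Z] [Fintype X'] [Fintype Y'] [Fintype Z']
    [Nonempty X] [Nonempty Y] [Nonempty Z] [Nonempty X'] [Nonempty Y'] [Nonempty Z']
    (p : X × Y × Z → ℝ) (hp0 : ∀ t, 0 ≤ p t) (hp1 : ∑ t, p t = 1)
    (p' : X' × Y' × Z' → ℝ) (hp'0 : ∀ t, 0 ≤ p' t) (hp'1 : ∑ t, p' t = 1) :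
    Un (fun s : (X × X') × (Y × Y') × (Z × Z') =>
      p (s.1.1, s.2.1.1, s.2.2.1) * p' (s.1.2, s.2.1.2, s.2.2.2)) = Un p + Un p' := by
  rw [stmt16_general p hp0 p' hp'0, hp1, hp'1, one_mul, one_mul]
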